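/- arXiv:2406.14036 — 2 statements merged into one kernel-verified Lean document; each statement's English description precedes it below -/
import Mathlib

section
/- Let n, d, m ≥ 1, B ≥ 1, R ∈ (0, 0.01) and λ > 0. Let x_1, …, x_n ∈ ℝ^d with ‖x_i‖₂ ≤ 1, let a ∈ {−1,+1}^m, and let W, W̃ ∈ ℝ^{d×m} with columns w_r, w̃_r satisfy: ‖w̃_r − w_r‖₂ ≤ R for all r; |⟨w_r, x_i⟩| ≤ B and |⟨w̃_r, x_i⟩| ≤ B for all r, i; and |W_{k,r}| ≤ B and |W̃_{k,r}| ≤ B for all k, r. If additionally λ_min(H(W)) ≥ λ and 8R·√(nd)·exp(22B) ≤ λ/2, then λ_min(H(W̃)) ≥ λ/2. -/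
/-!
The kernel is a Gram matrix. With `g_{k,i,r}(W) = ⟨v_{k,r}(W), S_i⟩ · S_{i,r}` one has
`u⊤ H(W) u = m · ∑_{r,l} (∑_{k,i} u_{k,i} x_{i,l} g_{k,i,r}(W))²` (`ntkH_quadForm`), so the
perturbation is measured on the factor `g` rather than on `H` itself.

Since `|⟨w̃_r - w_r, x_i⟩| ≤ R`, each softmax weight changes by a factor in `[e^{-2R}, e^{2R}]`
(`softS_ratio`), and each weight is at most `e^{2B}/m` (`softS_le`). Hence
`|g_{k,i,r}(W̃) - g_{k,i,r}(W)| ≤ 14 R B e^{2B} / m` (`abs_gradCoef_sub_le`), and by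
Cauchy–Schwarz the factor moves by at most `√(nd) · 14 R B e^{2B}` in Frobenius norm.
The inequality `(F + D)² ≥ (3/4) F² - 3 D²` then gives
`u⊤ H(W̃) u ≥ ((3/4) λ - 3 nd (14 R B e^{2B})²) ‖u‖²`.

The error term is quadratic in `R √(nd)`, so the hypothesis bounds it by a multiple of `λ²`; one
factor `λ` is absorbed by `λ ≤ H(W)_{p,p} ≤ 4 B² e^{4B}`, which leaves an error of at most `λ/4`.
-/

/-- The softmax vector of `x` with respect to the columns of `W`:
`S(W,x)_r = exp⟨w_r,x⟩ / Σ_ρ exp⟨w_ρ,x⟩`. -/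
noncomputable def softS {d m : ℕ} (W : Fin d → Fin m → ℝ) (x : Fin d → ℝ) (r : Fin m) : ℝ :=
  Real.exp (∑ k, W k r * x k) / ∑ ρ, Real.exp (∑ k, W k ρ * x k)

/-- `v_{k,r}(W)_ρ = β_k(W)_r − β_k(W)_ρ` where `β_k(W)_ρ = W_{k,ρ}·a_ρ`. -/
noncomputable def vKR {d m : ℕ} (W : Fin d → Fin m → ℝ) (a : Fin m → ℝ)
    (k : Fin d) (r ρ : Fin m) : ℝ :=
  W k r * a r - W k ρ * a ρ

/-- The model `F(W,x,a)_k = m·⟨β_k(W), S(W,x)⟩`. -/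
noncomputable def modelF {d m : ℕ} (W : Fin d → Fin m → ℝ) (x : Fin d → ℝ)
    (a : Fin m → ℝ) (k : Fin d) : ℝ :=
  (m : ℝ) * ∑ r, (W k r * a r) * softS W x r

/-- The NTK matrix: for `p = (k₁, i)` and `q = (k₂, j)`,
`H(W)_{p,q} = m·(x_i⊤x_j)·Σ_r ⟨v_{k₁,r},S_i⟩·S_{i,r}·⟨v_{k₂,r},S_j⟩·S_{j,r}`. -/
noncomputable def ntkH {n d m : ℕ} (W : Fin d → Fin m → ℝ) (a : Fin m → ℝ)
    (x : Fin n → Fin d → ℝ) (p q : Fin d × Fin n) : ℝ :=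
  (m : ℝ) * (∑ l, x p.2 l * x q.2 l) *
    ∑ r, (∑ ρ, vKR W a p.1 r ρ * softS W (x p.2) ρ) * softS W (x p.2) r *
      ((∑ ρ, vKR W a q.1 r ρ * softS W (x q.2) ρ) * softS W (x q.2) r)

/-- `lamMinGe H c` expresses `λ_min(H) ≥ c` for the (symmetric) matrix `H` via the
quadratic-form characterization: `c·‖u‖₂² ≤ u⊤Hu` for every vector `u`. -/
def lamMinGe {n d : ℕ} (H : (Fin d × Fin n) → (Fin d × Fin n) → ℝ) (c : ℝ) : Prop :=
  ∀ u : Fin d × Fin n → ℝ, c * (∑ p, (u p) ^ 2) ≤ ∑ p, ∑ q, u p * H p q * u q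

/-! ### The kernel as a Gram matrix -/

/-- The coefficient `g_{k,r} = ⟨v_{k,r}(W), S(W,x)⟩ · S(W,x)_r`; up to the factor `√m · x_l` these
are the entries of the Gram factor of the kernel. -/
noncomputable def gradCoef {d m : ℕ} (W : Fin d → Fin m → ℝ) (a : Fin m → ℝ)
    (x : Fin d → ℝ) (k : Fin d) (r : Fin m) : ℝ :=
  (∑ ρ, vKR W a k r ρ * softS W x ρ) * softS W x r

/-- The quadratic form of the kernel as a sum of squares. -/
lemma ntkH_quadForm {n d m : ℕ} (W : Fin d → Fin m → ℝ) (a : Fin m → ℝ)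
    (x : Fin n → Fin d → ℝ) (u : Fin d × Fin n → ℝ) :
    ∑ p, ∑ q, u p * ntkH W a x p q * u q =
      m * ∑ r, ∑ l, (∑ p, u p * (x p.2 l * gradCoef W a (x p.2) p.1 r)) ^ 2 := by
  have h1 : ∀ p q, u p * ntkH W a x p q * u q = ∑ r, ∑ l, (m : ℝ) *
      ((u p * (x p.2 l * gradCoef W a (x p.2) p.1 r)) *
        (u q * (x q.2 l * gradCoef W a (x q.2) q.1 r))) := by
    intro p q
    change u p * ((m : ℝ) * (∑ l, x p.2 l * x q.2 l) *
      ∑ r, gradCoef W a (x p.2) p.1 r * gradCoef W a (x q.2) q.1 r) * u q = _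
    rw [mul_assoc (m : ℝ), Finset.sum_mul_sum, Finset.sum_comm]
    simp only [Finset.mul_sum, Finset.sum_mul]
    refine Finset.sum_congr rfl fun r _ => Finset.sum_congr rfl fun l _ => ?_
    ring
  have h2 : ∀ r l, (m : ℝ) * (∑ p, u p * (x p.2 l * gradCoef W a (x p.2) p.1 r)) ^ 2 =
      ∑ p, ∑ q, (m : ℝ) * ((u p * (x p.2 l * gradCoef W a (x p.2) p.1 r)) *
        (u q * (x q.2 l * gradCoef W a (x q.2) q.1 r))) := by
    intro r l
    rw [sq, Finset.sum_mul_sum]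
    simp only [Finset.mul_sum]
  rw [Finset.mul_sum]
  simp only [Finset.mul_sum Finset.univ _ (m : ℝ), h1]
  simp only [h2]
  refine (Finset.sum_congr rfl fun p _ => Finset.sum_comm.trans
    (Finset.sum_congr rfl fun r _ => Finset.sum_comm)).trans ?_
  exact Finset.sum_comm.trans (Finset.sum_congr rfl fun r _ => Finset.sum_comm)

/-! ### Perturbation of the softmax weights and of the Gram factor -/

section Softmax

variable {d m : ℕ} {B R : ℝ} {W Wt : Fin d → Fin m → ℝ} {x : Fin d → ℝ}

lemma softS_denom_pos (hm : 1 ≤ m) : 0 < ∑ ρ, Real.exp (∑ k, W k ρ * x k) :=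
  Finset.sum_pos (fun _ _ => Real.exp_pos _) ⟨⟨0, hm⟩, Finset.mem_univ _⟩

lemma softS_nonneg (r : Fin m) : 0 ≤ softS W x r :=
  div_nonneg (Real.exp_pos _).le (Finset.sum_nonneg fun _ _ => (Real.exp_pos _).le)

lemma softS_sum (hm : 1 ≤ m) : ∑ r, softS W x r = 1 := by
  unfold softS
  rw [← Finset.sum_div, div_self (softS_denom_pos hm).ne']

lemma softS_le (hm : 1 ≤ m) (h : ∀ r, |∑ k, W k r * x k| ≤ B) (r : Fin m) :
    softS W x r ≤ Real.exp (2 * B) / m := by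
  have hm' : (0 : ℝ) < m := by exact_mod_cast hm
  have hden : (m : ℝ) * Real.exp (-B) ≤ ∑ ρ, Real.exp (∑ k, W k ρ * x k) := by
    calc (m : ℝ) * Real.exp (-B) = ∑ _ρ : Fin m, Real.exp (-B) := by simp
      _ ≤ _ := Finset.sum_le_sum fun ρ _ => Real.exp_le_exp.2 (abs_le.1 (h ρ)).1
  unfold softS
  rw [div_le_div_iff₀ (softS_denom_pos hm) hm']
  calc Real.exp (∑ k, W k r * x k) * m ≤ Real.exp B * m := by
        gcongr
        exact (abs_le.1 (h r)).2
    _ = Real.exp (2 * B) * (m * Real.exp (-B)) := by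
        rw [show B = 2 * B + -B by ring, Real.exp_add]
        ring_nf
    _ ≤ _ := by gcongr

/-- Moving every logit by at most `R` multiplies each softmax weight by at most `e^{2R}`. -/
lemma softS_ratio (hm : 1 ≤ m)
    (h : ∀ r, |(∑ k, Wt k r * x k) - ∑ k, W k r * x k| ≤ R) (r : Fin m) :
    softS Wt x r ≤ Real.exp (2 * R) * softS W x r := by
  unfold softS
  rw [← mul_div_assoc, div_le_div_iff₀ (softS_denom_pos hm) (softS_denom_pos hm)]
  have h1 : Real.exp (∑ k, Wt k r * x k) ≤ Real.exp R * Real.exp (∑ k, W k r * x k) := by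
    rw [← Real.exp_add]
    exact Real.exp_le_exp.2 (by linarith [(abs_le.1 (h r)).2])
  have h2 : ∑ ρ, Real.exp (∑ k, W k ρ * x k) ≤
      Real.exp R * ∑ ρ, Real.exp (∑ k, Wt k ρ * x k) := by
    rw [Finset.mul_sum]
    refine Finset.sum_le_sum fun ρ _ => ?_
    rw [← Real.exp_add]
    exact Real.exp_le_exp.2 (by linarith [(abs_le.1 (h ρ)).1])
  calc _ ≤ (Real.exp R * Real.exp (∑ k, W k r * x k)) *
        (Real.exp R * ∑ ρ, Real.exp (∑ k, Wt k ρ * x k)) :=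
        mul_le_mul h1 h2 (softS_denom_pos hm).le (by positivity)
    _ = _ := by
        rw [two_mul, Real.exp_add]
        ring

lemma abs_softS_sub_le (hm : 1 ≤ m) (hR : 0 < R) (hR' : R < 0.01)
    (h : ∀ r, |(∑ k, Wt k r * x k) - ∑ k, W k r * x k| ≤ R) (r : Fin m) :
    |softS Wt x r - softS W x r| ≤ 3 * R * softS W x r := by
  have h1 := softS_ratio hm h r
  have h2 : softS W x r ≤ Real.exp (2 * R) * softS Wt x r :=
    softS_ratio hm (fun r => by rw [abs_sub_comm]; exact h r) r
  have h3 : Real.exp (-(2 * R)) * softS W x r ≤ softS Wt x r := by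
    rw [Real.exp_neg, inv_mul_le_iff₀ (Real.exp_pos _)]
    exact h2
  have h0 := softS_nonneg (W := W) (x := x) r
  have h4 : 1 - 2 * R ≤ Real.exp (-(2 * R)) := by linarith [Real.add_one_le_exp (-(2 * R))]
  -- `e^{2R} ≤ 1 / (1 - 2R) ≤ 1 + 3R` because `R < 0.01`
  have h5 : Real.exp (2 * R) ≤ 1 + 3 * R := by
    have h6 : Real.exp (2 * R) * Real.exp (-(2 * R)) = 1 := by
      rw [← Real.exp_add]
      simp
    have h7 : Real.exp (2 * R) * (1 - 2 * R) ≤ 1 := by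
      exact (mul_le_mul_of_nonneg_left h4 (Real.exp_pos _).le).trans_eq h6
    norm_num at hR'
    have h8 : 1 ≤ (1 + 3 * R) * (1 - 2 * R) := by nlinarith
    exact le_of_mul_le_mul_right (h7.trans h8) (by linarith)
  have h9 := mul_le_mul_of_nonneg_right h4 h0
  have h10 := mul_le_mul_of_nonneg_right h5 h0
  have h11 := mul_nonneg hR.le h0
  rw [abs_le]
  constructor <;> linarith

lemma abs_sum_mul_softS_le (hm : 1 ≤ m) {c : Fin m → ℝ} {C : ℝ} (hc : ∀ r, |c r| ≤ C) :
    |∑ ρ, c ρ * softS W x ρ| ≤ C := by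
  calc _ ≤ ∑ ρ, |c ρ * softS W x ρ| := Finset.abs_sum_le_sum_abs _ _
    _ ≤ ∑ ρ, C * softS W x ρ := Finset.sum_le_sum fun ρ _ => by
        rw [abs_mul, abs_of_nonneg (softS_nonneg ρ)]
        exact mul_le_mul_of_nonneg_right (hc ρ) (softS_nonneg ρ)
    _ = C := by rw [← Finset.mul_sum, softS_sum hm, mul_one]

variable {a : Fin m → ℝ}

lemma abs_vKR_le (ha : ∀ r, |a r| = 1) (hWb : ∀ k r, |W k r| ≤ B) (k : Fin d) (r ρ : Fin m) :
    |vKR W a k r ρ| ≤ 2 * B := by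
  unfold vKR
  refine (abs_sub _ _).trans ?_
  rw [abs_mul, abs_mul, ha, ha]
  linarith [hWb k r, hWb k ρ]

lemma abs_gradCoef_le (hm : 1 ≤ m) (hB : 1 ≤ B) (ha : ∀ r, |a r| = 1)
    (hWb : ∀ k r, |W k r| ≤ B) (hWx : ∀ r, |∑ k, W k r * x k| ≤ B) (k : Fin d) (r : Fin m) :
    |gradCoef W a x k r| ≤ 2 * B * (Real.exp (2 * B) / m) := by
  unfold gradCoef
  rw [abs_mul, abs_of_nonneg (softS_nonneg r)]
  exact mul_le_mul (abs_sum_mul_softS_le hm fun ρ => abs_vKR_le ha hWb k r ρ) (softS_le hm hWx r)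
    (softS_nonneg r) (by linarith)

/-- The perturbation bound for the Gram factor, from the product rule: the change of `v` costs
`2R`, and each of the two softmax factors costs `2B · 3R`. -/
lemma abs_gradCoef_sub_le (hm : 1 ≤ m) (hB : 1 ≤ B) (hR : 0 < R) (hR' : R < 0.01)
    (ha : ∀ r, |a r| = 1) (hWb : ∀ k r, |W k r| ≤ B)
    (hWx : ∀ r, |∑ k, W k r * x k| ≤ B) (hWtx : ∀ r, |∑ k, Wt k r * x k| ≤ B)
    (h : ∀ r, |(∑ k, Wt k r * x k) - ∑ k, W k r * x k| ≤ R)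
    (hW : ∀ k r, |Wt k r - W k r| ≤ R) (k : Fin d) (r : Fin m) :
    |gradCoef Wt a x k r - gradCoef W a x k r| ≤ 14 * R * B * (Real.exp (2 * B) / m) := by
  set T := Real.exp (2 * B) / m with hT
  have hT0 : 0 ≤ T := by positivity
  have e1 : |∑ ρ, (vKR Wt a k r ρ - vKR W a k r ρ) * softS Wt x ρ| ≤ 2 * R := by
    refine abs_sum_mul_softS_le hm fun ρ => ?_
    have : vKR Wt a k r ρ - vKR W a k r ρ =
        (Wt k r - W k r) * a r - (Wt k ρ - W k ρ) * a ρ := by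
      unfold vKR
      ring
    rw [this]
    refine (abs_sub _ _).trans ?_
    rw [abs_mul, abs_mul, ha, ha]
    linarith [hW k r, hW k ρ]
  have e2 : |∑ ρ, vKR W a k r ρ * (softS Wt x ρ - softS W x ρ)| ≤ 6 * R * B := by
    calc _ ≤ ∑ ρ, |vKR W a k r ρ * (softS Wt x ρ - softS W x ρ)| :=
          Finset.abs_sum_le_sum_abs _ _
      _ ≤ ∑ ρ, (2 * B) * (3 * R * softS W x ρ) := Finset.sum_le_sum fun ρ _ => by
          rw [abs_mul]
          exact mul_le_mul (abs_vKR_le ha hWb k r ρ) (abs_softS_sub_le hm hR hR' h ρ)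
            (abs_nonneg _) (by linarith)
      _ = 6 * R * B := by
          rw [← Finset.mul_sum, ← Finset.mul_sum, softS_sum hm]
          ring
  have e3 : |∑ ρ, vKR W a k r ρ * softS W x ρ| ≤ 2 * B :=
    abs_sum_mul_softS_le hm fun ρ => abs_vKR_le ha hWb k r ρ
  have e4 : |softS Wt x r - softS W x r| ≤ 3 * R * T :=
    (abs_softS_sub_le hm hR hR' h r).trans
      (mul_le_mul_of_nonneg_left (softS_le hm hWx r) (by linarith))
  have e5 : |softS Wt x r| ≤ T := by
    rw [abs_of_nonneg (softS_nonneg r)]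
    exact softS_le hm hWtx r
  have key : gradCoef Wt a x k r - gradCoef W a x k r =
      (∑ ρ, (vKR Wt a k r ρ - vKR W a k r ρ) * softS Wt x ρ +
        ∑ ρ, vKR W a k r ρ * (softS Wt x ρ - softS W x ρ)) * softS Wt x r +
      (∑ ρ, vKR W a k r ρ * softS W x ρ) * (softS Wt x r - softS W x r) := by
    unfold gradCoef
    simp only [sub_mul, mul_sub, Finset.sum_sub_distrib]
    ring
  rw [key]
  calc _ ≤ (2 * R + 6 * R * B) * T + (2 * B) * (3 * R * T) := by
        refine (abs_add_le _ _).trans (add_le_add ?_ ?_)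
        · rw [abs_mul]
          exact mul_le_mul ((abs_add_le _ _).trans (add_le_add e1 e2)) e5 (abs_nonneg _)
            (by positivity)
        · rw [abs_mul]
          exact mul_le_mul e3 e4 (abs_nonneg _) (by positivity)
    _ ≤ 14 * R * B * T := by
        have := mul_nonneg (mul_nonneg hR.le (sub_nonneg.2 hB)) hT0
        nlinarith

end Softmax

/-! ### Size of the error term -/

/-- The numerical step: `R √N e^{22B} ≤ λ/16` and the a priori bound `λ ≤ 4 B² e^{4B}` make the
quadratic error term at most `λ/4`. -/
lemma error_le {B R lam N : ℝ} (hB : 1 ≤ B) (hR : 0 < R) (hlam : 0 < lam) (hN : 0 ≤ N)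
    (hup : lam ≤ (2 * B * Real.exp (2 * B)) ^ 2)
    (hgap : 8 * R * Real.sqrt N * Real.exp (22 * B) ≤ lam / 2) :
    3 * (N * (14 * R * B * Real.exp (2 * B)) ^ 2) ≤ lam / 4 := by
  set E := Real.exp B with hE
  have hBE : B ≤ E := by linarith [Real.add_one_le_exp B]
  have hE2 : 2 ≤ E := by linarith [Real.add_one_le_exp B]
  have h2 : Real.exp (2 * B) = E ^ 2 := by
    rw [hE, ← Real.exp_nat_mul]
    norm_num
  have h22 : Real.exp (22 * B) = E ^ 22 := by
    rw [hE, ← Real.exp_nat_mul]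
    norm_num
  rw [h2] at hup ⊢
  rw [h22] at hgap
  have hE0 : 0 < E := by linarith
  have hB2 : B ^ 2 ≤ E ^ 2 := by gcongr
  have hup' : lam ≤ 4 * E ^ 6 := by
    calc lam ≤ 4 * B ^ 2 * E ^ 4 := by
          linarith [show (2 * B * E ^ 2) ^ 2 = 4 * B ^ 2 * E ^ 4 by ring]
      _ ≤ 4 * E ^ 2 * E ^ 4 := by gcongr
      _ = _ := by ring
  have hsq : N * R ^ 2 * E ^ 44 ≤ lam * E ^ 6 / 64 := by
    have h : R * Real.sqrt N * E ^ 22 ≤ lam / 16 := by linarith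
    calc N * R ^ 2 * E ^ 44 = (R * Real.sqrt N * E ^ 22) ^ 2 := by
          rw [mul_pow, mul_pow, Real.sq_sqrt hN]
          ring
      _ ≤ (lam / 16) ^ 2 := by gcongr
      _ = lam * lam / 256 := by ring
      _ ≤ lam * (4 * E ^ 6) / 256 := by gcongr
      _ = _ := by ring
  have hsq' : N * R ^ 2 * E ^ 38 ≤ lam / 64 := by
    refine le_of_mul_le_mul_right ?_ (pow_pos hE0 6)
    linarith [show N * R ^ 2 * E ^ 38 * E ^ 6 = N * R ^ 2 * E ^ 44 by ring]
  have h32 : (2 : ℝ) ^ 32 ≤ E ^ 32 := by gcongr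
  have hA : 0 ≤ N * R ^ 2 * E ^ 6 := by positivity
  have h38 : N * R ^ 2 * E ^ 6 * 2 ^ 32 ≤ N * R ^ 2 * E ^ 38 := by
    calc _ ≤ N * R ^ 2 * E ^ 6 * E ^ 32 := by gcongr
      _ = _ := by ring
  calc 3 * (N * (14 * R * B * E ^ 2) ^ 2) = 588 * (N * R ^ 2 * E ^ 4 * B ^ 2) := by ring
    _ ≤ 588 * (N * R ^ 2 * E ^ 4 * E ^ 2) := by gcongr
    _ = 588 * (N * R ^ 2 * E ^ 6) := by ring
    _ ≤ lam / 4 := by linarith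

/-- Cauchy–Schwarz for the Gram factor: if the rows of `x` have norm at most `1` and `|c| ≤ C / m`
entrywise, the Frobenius norm bounds the quadratic form by `nd · C²`. -/
lemma quadForm_le {n d m : ℕ} (hm : 1 ≤ m) {x : Fin n → Fin d → ℝ}
    (hx : ∀ i, ∑ l, (x i l) ^ 2 ≤ 1) {c : Fin d × Fin n → Fin m → ℝ} {C : ℝ}
    (hc : ∀ p r, |c p r| ≤ C / m) (u : Fin d × Fin n → ℝ) :
    m * ∑ r, ∑ l, (∑ p, u p * (x p.2 l * c p r)) ^ 2 ≤
      (n : ℝ) * d * C ^ 2 * ∑ p, (u p) ^ 2 := by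
  have hm' : (0 : ℝ) < m := by exact_mod_cast hm
  set U := ∑ p, (u p) ^ 2 with hU
  have hU0 : 0 ≤ U := Finset.sum_nonneg fun _ _ => sq_nonneg _
  have hr : ∀ r, ∑ l, (∑ p, u p * (x p.2 l * c p r)) ^ 2 ≤ U * ((n : ℝ) * d * (C / m) ^ 2) := by
    intro r
    calc _ ≤ ∑ l, U * ∑ p : Fin d × Fin n, (x p.2 l * c p r) ^ 2 :=
          Finset.sum_le_sum fun l _ => Finset.sum_mul_sq_le_sq_mul_sq _ _ _
      _ = U * ∑ p : Fin d × Fin n, (∑ l, (x p.2 l) ^ 2) * (c p r) ^ 2 := by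
          rw [← Finset.mul_sum, Finset.sum_comm]
          simp only [mul_pow, Finset.sum_mul]
      _ ≤ U * ∑ _p : Fin d × Fin n, (C / m) ^ 2 := by
          refine mul_le_mul_of_nonneg_left (Finset.sum_le_sum fun p _ => ?_) hU0
          have h1 : (c p r) ^ 2 ≤ (C / m) ^ 2 := sq_le_sq' (abs_le.1 (hc p r)).1 (abs_le.1 (hc p r)).2
          exact (mul_le_of_le_one_left (sq_nonneg _) (hx p.2)).trans h1
      _ = _ := by
          rw [Finset.sum_const, Finset.card_univ, Fintype.card_prod, Fintype.card_fin,
            Fintype.card_fin, nsmul_eq_mul, Nat.cast_mul]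
          ring
  calc _ ≤ (m : ℝ) * ∑ _r : Fin m, U * ((n : ℝ) * d * (C / m) ^ 2) :=
        mul_le_mul_of_nonneg_left (Finset.sum_le_sum fun r _ => hr r) hm'.le
    _ = _ := by
        simp
        field_simp

/-! ### Stability of the smallest eigenvalue -/

/-- If `λ_min(H(W)) ≥ λ` and the kernel perturbation bound
`8R·√(nd)·exp(22B) ≤ λ/2` holds, then `λ_min(H(W̃)) ≥ λ/2`. -/
theorem stmt_5 (n d m : ℕ) (hn : 1 ≤ n) (hd : 1 ≤ d) (hm : 1 ≤ m)
    (B R lam : ℝ) (hB : 1 ≤ B) (hR : 0 < R) (hR' : R < 0.01) (hlam : 0 < lam)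
    (x : Fin n → Fin d → ℝ) (hx : ∀ i, Real.sqrt (∑ l, (x i l) ^ 2) ≤ 1)
    (a : Fin m → ℝ) (ha : ∀ r, a r = 1 ∨ a r = -1)
    (W Wt : Fin d → Fin m → ℝ)
    (hWWt : ∀ r, Real.sqrt (∑ k, (Wt k r - W k r) ^ 2) ≤ R)
    (hWx : ∀ r i, |∑ k, W k r * x i k| ≤ B)
    (hWtx : ∀ r i, |∑ k, Wt k r * x i k| ≤ B)
    (hWb : ∀ k r, |W k r| ≤ B) (hWtb : ∀ k r, |Wt k r| ≤ B)
    (hmin : lamMinGe (ntkH W a x) lam)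
    (hgap : 8 * R * Real.sqrt ((n : ℝ) * d) * Real.exp (22 * B) ≤ lam / 2) :
    lamMinGe (ntkH Wt a x) (lam / 2) := by
  have ha' : ∀ r, |a r| = 1 := fun r => by rcases ha r with h | h <;> simp [h]
  have hm' : (0 : ℝ) < m := by exact_mod_cast hm
  have hx' : ∀ i, ∑ l, (x i l) ^ 2 ≤ 1 := fun i => by
    simpa using (Real.sqrt_le_left zero_le_one).1 (hx i)
  have hW2 : ∀ r, ∑ k, (Wt k r - W k r) ^ 2 ≤ R ^ 2 := fun r =>
    (Real.sqrt_le_left hR.le).1 (hWWt r)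
  have hWe : ∀ k r, |Wt k r - W k r| ≤ R := fun k r => by
    refine abs_le_of_sq_le_sq ?_ hR.le
    exact (Finset.single_le_sum (f := fun k => (Wt k r - W k r) ^ 2)
      (fun _ _ => sq_nonneg _) (Finset.mem_univ k)).trans (hW2 r)
  have hlogit : ∀ i r, |(∑ k, Wt k r * x i k) - ∑ k, W k r * x i k| ≤ R := fun i r => by
    refine abs_le_of_sq_le_sq ?_ hR.le
    rw [← Finset.sum_sub_distrib]
    simp only [← sub_mul]
    refine (Finset.sum_mul_sq_le_sq_mul_sq _ _ _).trans ?_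
    exact (mul_le_of_le_one_right (Finset.sum_nonneg fun _ _ => sq_nonneg _) (hx' i)).trans (hW2 r)
  -- the a priori bound on `lam`, by testing the form on a standard basis vector
  have hup : lam ≤ (2 * B * Real.exp (2 * B)) ^ 2 := by
    let p₀ : Fin d × Fin n := (⟨0, hd⟩, ⟨0, hn⟩)
    have h := hmin (Pi.single p₀ 1)
    have h1 : ∑ p, ((Pi.single p₀ 1 : Fin d × Fin n → ℝ) p) ^ 2 = 1 := by
      simp [Pi.single_apply]
    rw [h1, mul_one] at h
    have h2 : ∑ p, ∑ q, (Pi.single p₀ 1 : Fin d × Fin n → ℝ) p * ntkH W a x p q *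
        (Pi.single p₀ 1 : Fin d × Fin n → ℝ) q = ntkH W a x p₀ p₀ := by
      simp [Pi.single_apply]
    rw [h2] at h
    refine h.trans ?_
    change (m : ℝ) * (∑ l, x p₀.2 l * x p₀.2 l) *
      ∑ r, gradCoef W a (x p₀.2) p₀.1 r * gradCoef W a (x p₀.2) p₀.1 r ≤ _
    simp only [← sq]
    calc _ ≤ (m : ℝ) * 1 * ∑ _r : Fin m, (2 * B * (Real.exp (2 * B) / m)) ^ 2 := by
          refine mul_le_mul (mul_le_mul_of_nonneg_left (hx' _) hm'.le)
            (Finset.sum_le_sum fun r _ => ?_)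
            (Finset.sum_nonneg fun _ _ => sq_nonneg _) (by positivity)
          have := abs_gradCoef_le hm hB ha' hWb (fun r => hWx r p₀.2) p₀.1 r
          exact sq_le_sq' (abs_le.1 this).1 (abs_le.1 this).2
      _ = _ := by
          simp
          field_simp
  have herr := error_le hB hR hlam (by positivity) hup hgap
  intro u
  have hF := hmin u
  rw [ntkH_quadForm] at hF ⊢
  have hD := quadForm_le hm hx'
    (c := fun p r => gradCoef Wt a (x p.2) p.1 r - gradCoef W a (x p.2) p.1 r)
    (C := 14 * R * B * Real.exp (2 * B))
    (fun p r => by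
      rw [mul_div_assoc]
      exact abs_gradCoef_sub_le hm hB hR hR' ha' hWb (fun r => hWx r p.2)
        (fun r => hWtx r p.2) (hlogit p.2) hWe p.1 r) u
  set U := ∑ p, (u p) ^ 2 with hU
  have hU0 : 0 ≤ U := Finset.sum_nonneg fun _ _ => sq_nonneg _
  -- `(F + D)² ≥ (3/4) F² - 3 D²`, summed over all `r` and `l`
  have hsum : 3 / 4 * (m * ∑ r, ∑ l, (∑ p, u p * (x p.2 l * gradCoef W a (x p.2) p.1 r)) ^ 2) -
      3 * (m * ∑ r, ∑ l, (∑ p, u p * (x p.2 l *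
        (gradCoef Wt a (x p.2) p.1 r - gradCoef W a (x p.2) p.1 r))) ^ 2) ≤
      m * ∑ r, ∑ l, (∑ p, u p * (x p.2 l * gradCoef Wt a (x p.2) p.1 r)) ^ 2 := by
    simp only [Finset.mul_sum, ← Finset.sum_sub_distrib]
    refine Finset.sum_le_sum fun r _ => Finset.sum_le_sum fun l _ => ?_
    simp only [mul_sub, Finset.sum_sub_distrib]
    set F := ∑ p, u p * (x p.2 l * gradCoef W a (x p.2) p.1 r)
    set G := ∑ p, u p * (x p.2 l * gradCoef Wt a (x p.2) p.1 r)
    have := mul_nonneg hm'.le (sq_nonneg (F / 2 + 2 * (G - F)))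
    nlinarith
  have h1 := mul_le_mul_of_nonneg_right herr hU0
  linarith
end

section
/- Let d, m ≥ 1, B ≥ 1, R > 0, and let x ∈ ℝ^d with ‖x‖₂ ≤ 1. Let w_1, …, w_m and v_1, …, v_m in ℝ^d satisfy |⟨w_r, x⟩| ≤ B and ‖v_r − w_r‖₂ ≤ R for every r ∈ [m]. Define the softmax vectors S, S̃ ∈ ℝ^m by S_r := exp(⟨w_r, x⟩)/Σ_{ρ=1}^m exp(⟨w_ρ, x⟩) and S̃_r := exp(⟨v_r, x⟩)/Σ_{ρ=1}^m exp(⟨v_ρ, x⟩). Then for every z ∈ ℝ^m with ‖z‖_∞ ≤ 1, |⟨z, S⟩ − ⟨z, S̃⟩| ≤ R·exp(4B + 3R). -/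
/-! Changing every exponent by at most `R` changes each numerator and the normalising sum of a
softmax by a factor of at most `exp R`, hence each softmax weight by a factor of at most `exp (2R)`
(`softmax_le`). The weights sum to one, so the `ℓ¹` distance between the two softmax vectors is at
most `exp (2R) - 1 ≤ 2R exp (2R)`, which is below `R exp (4B + 3R)` because `2 ≤ exp 4`. The
exponents `⟨w_r, x⟩` and `⟨v_r, x⟩` differ by at most `R` by the Cauchy-Schwarz inequality. -/

lemma softmax_le {m : ℕ} (a b : Fin m → ℝ) (R : ℝ) (h : ∀ r, |a r - b r| ≤ R) (r : Fin m) :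
    Real.exp (a r) / ∑ ρ, Real.exp (a ρ)
      ≤ Real.exp (2 * R) * (Real.exp (b r) / ∑ ρ, Real.exp (b ρ)) := by
  have hP : 0 < ∑ ρ, Real.exp (a ρ) :=
    Finset.sum_pos (fun _ _ => Real.exp_pos _) ⟨r, Finset.mem_univ r⟩
  have hQ : 0 < ∑ ρ, Real.exp (b ρ) :=
    Finset.sum_pos (fun _ _ => Real.exp_pos _) ⟨r, Finset.mem_univ r⟩
  have h1 : Real.exp (a r) ≤ Real.exp R * Real.exp (b r) := by
    rw [← Real.exp_add]
    exact Real.exp_le_exp.2 (by linarith [(abs_le.1 (h r)).2])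
  have h2 : ∑ ρ, Real.exp (b ρ) ≤ Real.exp R * ∑ ρ, Real.exp (a ρ) := by
    rw [Finset.mul_sum]
    refine Finset.sum_le_sum fun i _ => ?_
    rw [← Real.exp_add]
    exact Real.exp_le_exp.2 (by linarith [(abs_le.1 (h i)).1])
  rw [← mul_div_assoc, div_le_div_iff₀ hP hQ]
  calc Real.exp (a r) * ∑ ρ, Real.exp (b ρ)
      ≤ (Real.exp R * Real.exp (b r)) * (Real.exp R * ∑ ρ, Real.exp (a ρ)) := by gcongr
    _ = Real.exp (2 * R) * Real.exp (b r) * ∑ ρ, Real.exp (a ρ) := by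
        rw [two_mul, Real.exp_add]; ring


/-- For any `z` with `‖z‖_∞ ≤ 1`, the inner products of `z` with the
two softmax vectors `S, S̃` differ by at most `R·exp(4B+3R)`. -/
theorem stmt_18 (d m : ℕ) (hd : 1 ≤ d) (hm : 1 ≤ m) (B R : ℝ) (hB : 1 ≤ B) (hR : 0 < R)
    (x : Fin d → ℝ) (hx : Real.sqrt (∑ k, (x k) ^ 2) ≤ 1)
    (w v : Fin m → Fin d → ℝ)
    (hw : ∀ r, |∑ k, w r k * x k| ≤ B)
    (hv : ∀ r, Real.sqrt (∑ k, (v r k - w r k) ^ 2) ≤ R) :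
    ∀ z : Fin m → ℝ, (∀ r, |z r| ≤ 1) →
      |(∑ r, z r * (Real.exp (∑ k, w r k * x k) / (∑ ρ, Real.exp (∑ k, w ρ k * x k))))
        - ∑ r, z r * (Real.exp (∑ k, v r k * x k) / (∑ ρ, Real.exp (∑ k, v ρ k * x k)))|
      ≤ R * Real.exp (4 * B + 3 * R) := by
  intro z hz
  have hx1 : ∑ k, (x k) ^ 2 ≤ 1 := by
    have := (Real.sqrt_le_left zero_le_one).1 hx
    simpa using this
  have hab : ∀ r, |(∑ k, v r k * x k) - ∑ k, w r k * x k| ≤ R := by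
    intro r
    have hv2 : ∑ k, (v r k - w r k) ^ 2 ≤ R ^ 2 := (Real.sqrt_le_left hR.le).1 (hv r)
    have hcs := Finset.sum_mul_sq_le_sq_mul_sq Finset.univ (fun k => v r k - w r k) x
    rw [← Finset.sum_sub_distrib]
    simp only [← sub_mul]
    refine abs_le_of_sq_le_sq (hcs.trans ?_) hR.le
    calc _ ≤ R ^ 2 * 1 := by gcongr
      _ = R ^ 2 := mul_one _
  obtain ⟨a, ha⟩ : ∃ a : Fin m → ℝ, ∀ r, ∑ k, w r k * x k = a r := ⟨_, fun _ => rfl⟩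
  obtain ⟨b, hb⟩ : ∃ b : Fin m → ℝ, ∀ r, ∑ k, v r k * x k = b r := ⟨_, fun _ => rfl⟩
  simp only [ha, hb] at hab ⊢
  have ht : 1 ≤ Real.exp (2 * R) := Real.one_le_exp (by linarith)
  have hterm : ∀ r, |z r * (Real.exp (a r) / ∑ ρ, Real.exp (a ρ))
      - z r * (Real.exp (b r) / ∑ ρ, Real.exp (b ρ))|
      ≤ (Real.exp (2 * R) - 1) * (Real.exp (a r) / ∑ ρ, Real.exp (a ρ)) := by
    intro r
    have h1 := softmax_le b a R hab r
    have h2 := softmax_le a b R (fun r => by rw [abs_sub_comm]; exact hab r) r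
    rw [← mul_sub, abs_mul]
    refine (mul_le_of_le_one_left (abs_nonneg _) (hz r)).trans ?_
    set S := Real.exp (a r) / ∑ ρ, Real.exp (a ρ)
    set T := Real.exp (b r) / ∑ ρ, Real.exp (b ρ)
    rw [abs_le]
    constructor
    · linarith
    · rcases le_total T S with h | h <;>
        nlinarith [mul_le_mul_of_nonneg_left h (sub_nonneg.2 ht),
          show 0 ≤ S from by positivity]
  have hP : 0 < ∑ ρ, Real.exp (a ρ) :=
    Finset.sum_pos (fun _ _ => Real.exp_pos _) ⟨⟨0, hm⟩, Finset.mem_univ _⟩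
  -- `1 - 2R ≤ exp (-2R)`, multiplied by `exp (2R)`.
  have hexp : Real.exp (2 * R) - 1 ≤ 2 * R * Real.exp (2 * R) := by
    have h1 := Real.add_one_le_exp (-(2 * R))
    have h2 : Real.exp (-(2 * R)) * Real.exp (2 * R) = 1 := by
      rw [← Real.exp_add]; simp
    nlinarith [Real.exp_pos (2 * R)]
  have h4 : 2 ≤ Real.exp (4 * B + R) := by
    linarith [Real.add_one_le_exp (4 * B + R)]
  rw [← Finset.sum_sub_distrib]
  calc _ ≤ ∑ r, (Real.exp (2 * R) - 1) * (Real.exp (a r) / ∑ ρ, Real.exp (a ρ)) :=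
        (Finset.abs_sum_le_sum_abs _ _).trans (Finset.sum_le_sum fun r _ => hterm r)
    _ = Real.exp (2 * R) - 1 := by
        rw [← Finset.mul_sum, ← Finset.sum_div, div_self hP.ne', mul_one]
    _ ≤ R * (2 * Real.exp (2 * R)) := by linarith
    _ ≤ R * (Real.exp (4 * B + R) * Real.exp (2 * R)) := by gcongr
    _ = R * Real.exp (4 * B + 3 * R) := by
        rw [← Real.exp_add]; congr 2; ring
end
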